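/- In intuitionistic propositional logic, the generalised De Morgan scheme GDM (((γ₁ ∧ γ₂) → δ) → ((γ₁ → δ) ∨ (γ₂ → δ)) for all γ₁, γ₂, δ) implies the linearity scheme LIN: assuming all instances of GDM are provable, every instance (φ → ψ) ∨ (ψ → φ) is provable. -/

import Mathlib

/-- Propositional formulas over countably many atoms with `→`, `∧`, `∨`, `⊥`. -/
inductive PForm : Type
  | atom : ℕ → PForm
  | bot : PForm
  | imp : PForm → PForm → PForm
  | and : PForm → PForm → PForm
  | or : PForm → PForm → PForm

open PForm

/-- Hilbert-style provability for intuitionistic propositional logic,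
extended by an arbitrary set `Ax` of extra axioms, with modus ponens as the
only inference rule. -/
inductive HilbertProv (Ax : PForm → Prop) : PForm → Prop
  | extra {φ} : Ax φ → HilbertProv Ax φ
  | k (φ ψ) : HilbertProv Ax (imp φ (imp ψ φ))
  | s (φ ψ χ) : HilbertProv Ax
      (imp (imp φ (imp ψ χ)) (imp (imp φ ψ) (imp φ χ)))
  | andIntro (φ ψ) : HilbertProv Ax (imp φ (imp ψ (and φ ψ)))
  | andElimL (φ ψ) : HilbertProv Ax (imp (and φ ψ) φ)
  | andElimR (φ ψ) : HilbertProv Ax (imp (and φ ψ) ψ)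
  | orIntroL (φ ψ) : HilbertProv Ax (imp φ (or φ ψ))
  | orIntroR (φ ψ) : HilbertProv Ax (imp ψ (or φ ψ))
  | orElim (φ ψ χ) : HilbertProv Ax
      (imp (imp φ χ) (imp (imp ψ χ) (imp (or φ ψ) χ)))
  | exFalso (φ) : HilbertProv Ax (imp bot φ)
  | mp {φ ψ} : HilbertProv Ax (imp φ ψ) → HilbertProv Ax φ → HilbertProv Ax ψ

/-- The linearity axiom scheme LIN: all formulas of the form
`(φ → ψ) ∨ (ψ → φ)`. -/
def LINScheme : PForm → Prop :=
  fun f => ∃ φ ψ : PForm, f = or (imp φ ψ) (imp ψ φ)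

/-- In intuitionistic propositional logic (over any extra axiom set `Ax`),
if every instance of the generalised De Morgan scheme GDM is provable, then
every instance of the linearity scheme LIN is provable. -/
theorem gdm_implies_lin (Ax : PForm → Prop)
    (hGDM : ∀ γ₁ γ₂ δ : PForm,
      HilbertProv Ax
        (PForm.imp (PForm.imp (PForm.and γ₁ γ₂) δ)
          (PForm.or (PForm.imp γ₁ δ) (PForm.imp γ₂ δ)))) :
    ∀ φ ψ : PForm,
      HilbertProv Ax (PForm.or (PForm.imp φ ψ) (PForm.imp ψ φ)) := by
  intro φ ψ
  have comp : ∀ {a b c : PForm}, HilbertProv Ax (PForm.imp a b) →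
      HilbertProv Ax (PForm.imp b c) → HilbertProv Ax (PForm.imp a c) := by
    intro a b c hab hbc
    exact .mp (.mp (.s a b c) (.mp (.k _ _) hbc)) hab
  have idd : ∀ a : PForm, HilbertProv Ax (PForm.imp a a) := fun a =>
    .mp (.mp (.s a (PForm.imp a a) a) (.k _ _)) (.k _ _)
  have post : ∀ {a b c : PForm}, HilbertProv Ax (PForm.imp b c) →
      HilbertProv Ax (PForm.imp (PForm.imp a b) (PForm.imp a c)) := by
    intro a b c hbc
    exact .mp (.s a b c) (.mp (.k _ _) hbc)
  have h := HilbertProv.mp (hGDM φ ψ (PForm.and φ ψ)) (idd _)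
  exact .mp (.mp (.mp (.orElim _ _ _)
    (comp (post (.andElimR φ ψ)) (.orIntroL _ _)))
    (comp (post (.andElimL φ ψ)) (.orIntroR _ _))) h
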